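/- Let p be any prime and F = ℚ(√p) with fundamental unit ε. Then the fundamental unit ε is not a sum of two squares in the ring of integers O_F. -/

import Mathlib

/-!
In a totally real number field the inequality `2 |xy| ≤ x² + y²` holds at every infinite place.
So if `x` and `y` are integers and `x² + y²` is a unit `ε`, all conjugates of the integer `xy / ε`
are at most `1 / 2`; its norm is therefore `0`, which means that `x = 0` or `y = 0`, and `ε` is a
square. But a fundamental unit `ε` of a real quadratic field is not a square: `ε = η ^ 2` and
`η = ± ε ^ n` give `ε ^ (2 * n - 1) = 1`, so that every unit would be a root of unity, against
Dirichlet's unit theorem.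
-/

open NumberField Module
open scoped IntermediateField

/-- Fundamental units of a ring: those of which every unit is, up to sign, a power. No normalization
such as `1 < ε` is imposed, so `ε⁻¹`, `-ε` and `-ε⁻¹` are fundamental along with `ε`. -/
def IsFundamentalUnit {R : Type*} [Ring R] (ε : Rˣ) : Prop :=
  ∀ u : Rˣ, ∃ n : ℤ, u = ε ^ n ∨ u = -ε ^ n

namespace IsFundamentalUnit

variable {R : Type*} [Ring R] {ε : Rˣ}

theorem exists_sq_eq_zpow (hε : IsFundamentalUnit ε) (u : Rˣ) : ∃ n : ℤ, u ^ 2 = ε ^ (2 * n) := by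
  obtain ⟨n, rfl | rfl⟩ := hε u
  · exact ⟨n, by rw [mul_comm, zpow_mul, zpow_ofNat]⟩
  · exact ⟨n, by rw [neg_sq, mul_comm, zpow_mul, zpow_ofNat]⟩

theorem isOfFinOrder (hε : IsFundamentalUnit ε) (hfin : IsOfFinOrder ε) (u : Rˣ) :
    IsOfFinOrder u := by
  obtain ⟨n, hn⟩ := hε.exists_sq_eq_zpow u
  have hsq : IsOfFinOrder (u ^ 2) := hn ▸ hfin.zpow
  exact hsq.of_pow two_ne_zero

theorem isOfFinOrder_of_isSquare (hε : IsFundamentalUnit ε) (hsq : IsSquare ε) :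
    IsOfFinOrder ε := by
  obtain ⟨η, hη⟩ := hsq
  obtain ⟨n, hn⟩ := hε.exists_sq_eq_zpow η
  have hone : ε ^ (2 * n - 1) = 1 := by
    rw [zpow_sub_one, ← hn, sq, ← hη, mul_inv_cancel]
  exact isOfFinOrder_iff_zpow_eq_one.mpr ⟨2 * n - 1, by omega, hone⟩

theorem not_isSquare (hε : IsFundamentalUnit ε) {u : Rˣ} (hu : ¬ IsOfFinOrder u) :
    ¬ IsSquare ε :=
  fun hsq ↦ hu (hε.isOfFinOrder (hε.isOfFinOrder_of_isSquare hsq) u)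

end IsFundamentalUnit

section NumberField

variable {K : Type*} [Field K]

theorem two_mul_infinitePlace_mul_le {w : InfinitePlace K} (hw : w.IsReal) (x y : K) :
    2 * w (x * y) ≤ w (x ^ 2 + y ^ 2) := by
  simp only [← InfinitePlace.norm_embedding_of_isReal hw, map_add, map_mul, map_pow,
    Real.norm_eq_abs]
  set a := InfinitePlace.embedding_of_isReal hw x
  set b := InfinitePlace.embedding_of_isReal hw y
  rw [abs_of_nonneg (by positivity : 0 ≤ a ^ 2 + b ^ 2), abs_mul, ← mul_assoc, ← sq_abs a,
    ← sq_abs b]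
  exact two_mul_le_add_sq |a| |b|

variable [NumberField K]

theorem eq_zero_of_forall_infinitePlace_lt_one {a : 𝓞 K} (h : ∀ w : InfinitePlace K, w a < 1) :
    a = 0 := by
  by_contra ha
  obtain ⟨w⟩ : Nonempty (InfinitePlace K) := inferInstance
  exact (h w).not_ge (InfinitePlace.one_le_of_lt_one ha fun z _ ↦ h z)

theorem exists_unit_not_isOfFinOrder_of_rank_pos (h : 0 < Units.rank K) :
    ∃ u : (𝓞 K)ˣ, ¬ IsOfFinOrder u := by
  refine ⟨Units.fundSystem K ⟨0, h⟩, fun hfin ↦ ?_⟩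
  have hlog := Units.dirichletUnitTheorem.logEmbedding_eq_zero_iff.mpr
    ((CommGroup.mem_torsion _).mpr hfin)
  rw [Units.logEmbedding_fundSystem] at hlog
  exact (Units.basisUnitLattice K).ne_zero ⟨0, h⟩ (Subtype.ext hlog)

variable [IsTotallyReal K]

theorem exists_unit_not_isOfFinOrder_of_one_lt_finrank (hK : 1 < finrank ℚ K) :
    ∃ u : (𝓞 K)ˣ, ¬ IsOfFinOrder u := by
  apply exists_unit_not_isOfFinOrder_of_rank_pos
  have hcard : Fintype.card (InfinitePlace K) = finrank ℚ K := by
    rw [InfinitePlace.card_eq_nrRealPlaces_add_nrComplexPlaces,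
      IsTotallyReal.nrComplexPlaces_eq_zero, add_zero, IsTotallyReal.finrank]
  rw [Units.rank, hcard]
  omega

theorem mul_eq_zero_of_sq_add_sq_eq_unit {x y : 𝓞 K} {ε : (𝓞 K)ˣ} (h : x ^ 2 + y ^ 2 = ε) :
    x * y = 0 := by
  suffices hquot : x * y * (ε⁻¹ : (𝓞 K)ˣ) = 0 from (Units.mul_left_eq_zero _).mp hquot
  refine eq_zero_of_forall_infinitePlace_lt_one fun w ↦ ?_
  have hle := two_mul_infinitePlace_mul_le (IsTotallyReal.isReal w) (x : K) y
  have hε : (x : K) ^ 2 + (y : K) ^ 2 = (ε : K) := by exact_mod_cast congrArg (algebraMap (𝓞 K) K) h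
  have hpos : 0 < w (ε : K) := InfinitePlace.pos_iff.mpr (Units.coe_ne_zero ε)
  rw [hε] at hle
  have hcoe : ((x * y * (ε⁻¹ : (𝓞 K)ˣ) : 𝓞 K) : K) = x * y / ε := by simp [div_eq_mul_inv]
  rw [hcoe, map_div₀, div_lt_one hpos]
  linarith

theorem isSquare_of_sq_add_sq_eq_unit {x y : 𝓞 K} {ε : (𝓞 K)ˣ} (h : x ^ 2 + y ^ 2 = ε) :
    IsSquare ε := by
  obtain ⟨z, hz⟩ : ∃ z : 𝓞 K, z ^ 2 = ε := by
    rcases mul_eq_zero.mp (mul_eq_zero_of_sq_add_sq_eq_unit h) with rfl | rfl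
    · exact ⟨y, by simpa using h⟩
    · exact ⟨x, by simpa using h⟩
  have hunit : IsUnit z := (isUnit_pow_iff two_ne_zero).mp (hz ▸ ε.isUnit)
  exact ⟨hunit.unit, Units.ext (by simp [← hz, sq])⟩

theorem IsFundamentalUnit.sq_add_sq_ne {ε : (𝓞 K)ˣ} (hε : IsFundamentalUnit ε)
    (hK : 1 < finrank ℚ K) (x y : 𝓞 K) : x ^ 2 + y ^ 2 ≠ ε := fun h ↦ by
  obtain ⟨u, hu⟩ := exists_unit_not_isOfFinOrder_of_one_lt_finrank hK
  exact hε.not_isSquare hu (isSquare_of_sq_add_sq_eq_unit h)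

end NumberField

section Algebra

variable {R K : Type*} [CommRing R] [Field K] [Algebra R K]

theorem algebraMap_units_val_zpow (u : Rˣ) (n : ℤ) :
    algebraMap R K (u ^ n : Rˣ) = algebraMap R K u ^ n := by
  rw [← MonoidHom.coe_coe, ← Units.coe_map, map_zpow, Units.val_zpow_eq_zpow_val, Units.coe_map]

variable [FaithfulSMul R K] {a : R}

theorem isUnit_of_algebraMap_eq_zpow {u : Rˣ} {n : ℤ} (hn : n ≠ 0)
    (h : algebraMap R K u = algebraMap R K a ^ n) : IsUnit a := by
  have hinj := FaithfulSMul.algebraMap_injective R K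
  obtain ⟨m, rfl | rfl⟩ := n.eq_nat_or_neg
  · have hpow : a ^ m = u := hinj (by rw [h, map_pow, zpow_natCast])
    exact (isUnit_pow_iff (by simpa using hn)).mp (hpow ▸ u.isUnit)
  · have hpow : a ^ m = (u⁻¹ : Rˣ) :=
      hinj (by rw [map_units_inv, h, map_pow, zpow_neg, inv_inv, zpow_natCast])
    exact (isUnit_pow_iff (by simpa using hn)).mp (hpow ▸ u⁻¹.isUnit)

theorem isUnit_of_algebraMap_eq_zpow_or_neg_zpow {v : Rˣ} (hv : ¬ IsOfFinOrder v) {n : ℤ}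
    (h : algebraMap R K v = algebraMap R K a ^ n ∨ algebraMap R K v = -algebraMap R K a ^ n) :
    IsUnit a := by
  have hinj := FaithfulSMul.algebraMap_injective R K
  have hn : n ≠ 0 := by
    rintro rfl
    have hsq : v ^ 2 = 1 := Units.ext <| hinj <| by rcases h with h | h <;> simp [h]
    exact hv (isOfFinOrder_iff_pow_eq_one.mpr ⟨2, two_pos, hsq⟩)
  rcases h with h | h
  · exact isUnit_of_algebraMap_eq_zpow hn h
  · exact isUnit_of_algebraMap_eq_zpow (K := K) (u := -v) hn (by simp [h])

theorem exists_isFundamentalUnit_val_eq {v : Rˣ} (hv : ¬ IsOfFinOrder v)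
    (ha : ∀ u : Rˣ, ∃ n : ℤ,
      algebraMap R K u = algebraMap R K a ^ n ∨ algebraMap R K u = -algebraMap R K a ^ n) :
    ∃ e : Rˣ, (e : R) = a ∧ IsFundamentalUnit e := by
  obtain ⟨m, hm⟩ := ha v
  obtain ⟨e, rfl⟩ := isUnit_of_algebraMap_eq_zpow_or_neg_zpow hv hm
  refine ⟨e, rfl, fun u ↦ ?_⟩
  obtain ⟨n, hn⟩ := ha u
  have hinj : Function.Injective fun w : Rˣ ↦ algebraMap R K w :=
    (FaithfulSMul.algebraMap_injective R K).comp Units.val_injective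
  rw [← algebraMap_units_val_zpow, ← map_neg, ← Units.val_neg] at hn
  exact ⟨n, hn.imp (fun h ↦ hinj h) fun h ↦ hinj h⟩

end Algebra

section IntermediateField

variable {L : Type*} [Field L] [CharZero L] {F : IntermediateField ℚ L}

theorem exists_algebraMap_ringOfIntegers_eq {x : L} (hxF : x ∈ F) (hx : IsIntegral ℤ x) :
    ∃ a : 𝓞 F, algebraMap (𝓞 F) L a = x :=
  ⟨⟨⟨x, hxF⟩, (isIntegral_algebraMap_iff (algebraMap F L).injective).mp hx⟩, rfl⟩

theorem exists_isFundamentalUnit_algebraMap_eq {ε : L} {v : (𝓞 F)ˣ} (hv : ¬ IsOfFinOrder v)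
    (hεF : ε ∈ F) (hεint : IsIntegral ℤ ε)
    (hfund : ∀ u ∈ F, IsIntegral ℤ u → u ≠ 0 → IsIntegral ℤ u⁻¹ →
      ∃ n : ℤ, u = ε ^ n ∨ u = -ε ^ n) :
    ∃ e : (𝓞 F)ˣ, algebraMap (𝓞 F) L e = ε ∧ IsFundamentalUnit e := by
  have hmem (a : 𝓞 F) : algebraMap (𝓞 F) L a ∈ F := (a : F).2
  have hint (a : 𝓞 F) : IsIntegral ℤ (algebraMap (𝓞 F) L a) := a.isIntegral.algebraMap
  obtain ⟨a, rfl⟩ := exists_algebraMap_ringOfIntegers_eq hεF hεint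
  obtain ⟨e, rfl, he⟩ := exists_isFundamentalUnit_val_eq (K := L) hv fun u ↦
    hfund _ (hmem u) (hint u) (by simp) (by rw [← map_units_inv]; exact hint _)
  exact ⟨e, rfl, he⟩

end IntermediateField

theorem conj_eq_self_of_sq_eq_ofReal {z : ℂ} {r : ℝ} (hr : 0 ≤ r) (h : z ^ 2 = r) :
    star z = z := by
  have hsq : z ^ 2 = (√r : ℂ) ^ 2 := by rw [h, ← Complex.ofReal_pow, Real.sq_sqrt hr]
  rcases eq_or_eq_neg_of_sq_eq_sq z _ hsq with rfl | rfl <;> simp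

theorem isTotallyReal_adjoin_of_sq_eq {L : Type*} [Field L] [CharZero L] {α : L} {q : ℚ}
    (hq : 0 ≤ q) (hα : α ^ 2 = q) : IsTotallyReal ℚ⟮α⟯ where
  isReal w := by
    rw [InfinitePlace.isReal_iff, ComplexEmbedding.isReal_iff]
    set g := IntermediateField.AdjoinSimple.gen ℚ α
    have hg : g ^ 2 = q := Subtype.ext (by simpa [g] using hα)
    have hfix : star (w.embedding g) = w.embedding g :=
      conj_eq_self_of_sq_eq_ofReal (r := q) (mod_cast hq) (by rw [← map_pow, hg]; simp)
    have hconj : (ComplexEmbedding.conjugate w.embedding).toRatAlgHom =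
        w.embedding.toRatAlgHom :=
      IntermediateField.adjoin_algHom_ext ℚ (by rintro _ rfl; exact hfix)
    exact congrArg AlgHom.toRingHom hconj

theorem one_lt_finrank_adjoin_simple {K L : Type*} [Field K] [Field L] [Algebra K L] {α : L}
    (hint : IsIntegral K α) (hα : α ∉ (⊥ : IntermediateField K L)) : 1 < finrank K K⟮α⟯ := by
  have : FiniteDimensional K K⟮α⟯ := IntermediateField.adjoin.finiteDimensional hint
  have hne : finrank K K⟮α⟯ ≠ 1 := mt IntermediateField.finrank_adjoin_simple_eq_one_iff.mp hα
  have hpos : 0 < finrank K K⟮α⟯ := finrank_pos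
  omega

theorem fundamental_unit_not_sum_two_squares_general (d : ℕ) (hd : ¬ IsSquare d) (ε : ℝ)
    (hεF : ε ∈ IntermediateField.adjoin ℚ {Real.sqrt d})
    (hεint : IsIntegral ℤ ε)
    (hfund : ∀ u : ℝ, u ∈ IntermediateField.adjoin ℚ {Real.sqrt d} →
      IsIntegral ℤ u → u ≠ 0 → IsIntegral ℤ u⁻¹ →
      ∃ n : ℤ, u = ε ^ n ∨ u = -ε ^ n) :
    ¬ ∃ x y : ℝ, x ∈ IntermediateField.adjoin ℚ {Real.sqrt d} ∧
      y ∈ IntermediateField.adjoin ℚ {Real.sqrt d} ∧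
      IsIntegral ℤ x ∧ IsIntegral ℤ y ∧ x ^ 2 + y ^ 2 = ε := by
  rintro ⟨x, y, hxF, hyF, hx, hy, hxy⟩
  let F := ℚ⟮Real.sqrt d⟯
  have hsq : Real.sqrt d ^ 2 = (d : ℚ) := by simp
  have hint : IsIntegral ℚ (Real.sqrt d) := .of_pow two_pos (hsq ▸ isIntegral_algebraMap)
  have : FiniteDimensional ℚ F := IntermediateField.adjoin.finiteDimensional hint
  have : NumberField F := ⟨⟩
  have : IsTotallyReal F := isTotallyReal_adjoin_of_sq_eq d.cast_nonneg hsq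
  have hF : 1 < finrank ℚ F := one_lt_finrank_adjoin_simple hint fun hmem ↦
    irrational_sqrt_natCast_iff.mpr hd (IntermediateField.mem_bot.mp hmem)
  obtain ⟨v, hv⟩ := exists_unit_not_isOfFinOrder_of_one_lt_finrank hF
  obtain ⟨e, rfl, he⟩ := exists_isFundamentalUnit_algebraMap_eq hv hεF hεint hfund
  obtain ⟨a, rfl⟩ := exists_algebraMap_ringOfIntegers_eq hxF hx
  obtain ⟨b, rfl⟩ := exists_algebraMap_ringOfIntegers_eq hyF hy
  exact he.sq_add_sq_ne hF a b (FaithfulSMul.algebraMap_injective (𝓞 F) ℝ (by simpa using hxy))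

theorem fundamental_unit_not_sum_two_squares (p : ℕ) (hp : p.Prime) (ε : ℝ)
    (hεF : ε ∈ IntermediateField.adjoin ℚ {Real.sqrt p})
    (hεint : IsIntegral ℤ ε)
    (hfund : ∀ u : ℝ, u ∈ IntermediateField.adjoin ℚ {Real.sqrt p} →
      IsIntegral ℤ u → u ≠ 0 → IsIntegral ℤ u⁻¹ →
      ∃ n : ℤ, u = ε ^ n ∨ u = -ε ^ n) :
    ¬ ∃ x y : ℝ, x ∈ IntermediateField.adjoin ℚ {Real.sqrt p} ∧
      y ∈ IntermediateField.adjoin ℚ {Real.sqrt p} ∧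
      IsIntegral ℤ x ∧ IsIntegral ℤ y ∧ x ^ 2 + y ^ 2 = ε :=
  fundamental_unit_not_sum_two_squares_general p hp.prime.not_isSquare ε hεF hεint hfund
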